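/- For all s ∈ (-1, 1), the surface integral over the spherical cap M_s = {z ∈ ∂B₁ ⊂ ℝⁿ : zₙ > -s} of (zₙ + s)(zₙ² - z₁²) with respect to (n-1)-dimensional Hausdorff measure is strictly positive; moreover, for s ≥ 1 this integral vanishes, and for s ≤ -1 the domain of integration is empty. -/

import Mathlib

open MeasureTheory

lemma scap_finite (m : ℕ) :
    (μH[(m : ℝ)] : Measure (EuclideanSpace ℝ (Fin (m+1)))) (Metric.sphere 0 1) < ⊤ := by
  let v : Fin (m+1) → ℝ → (Fin m → ℝ) → EuclideanSpace ℝ (Fin (m+1)) :=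
    fun i c x => WithLp.toLp 2 (i.insertNth (α := fun _ => ℝ) c x)
  let F : Fin (m+1) → ℝ → (Fin m → ℝ) → EuclideanSpace ℝ (Fin (m+1)) :=
    fun i c x => (‖v i c x‖)⁻¹ • v i c x
  have hvi : ∀ i c x, (v i c x) i = c := by intro i c x; simp [v]
  have hv : ∀ i c, ContDiff ℝ 1 (v i c) := by
    intro i c
    refine PiLp.contDiff_toLp.comp ?_
    rw [contDiff_pi]
    intro j
    refine Fin.succAboveCases i ?_ (fun k => ?_) j
    · simpa using contDiff_const
    · simpa using contDiff_apply ℝ ℝ k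
  have hv0 : ∀ i c, c ≠ 0 → ∀ x, v i c x ≠ 0 := by
    intro i c hc x h
    apply hc
    rw [← hvi i c x, h]; simp
  have hF : ∀ i c, c ≠ 0 → ContDiff ℝ 1 (F i c) := by
    intro i c hc
    exact (((hv i c).norm ℝ (hv0 i c hc)).inv (fun x => norm_ne_zero_iff.2 (hv0 i c hc x))).smul
      (hv i c)
  have hfin : ∀ i c, c ≠ 0 →
      (μH[(m : ℝ)]) (F i c '' Metric.closedBall 0 1) < ⊤ := by
    intro i c hc
    have hcomp : IsCompact (Metric.closedBall (0 : Fin m → ℝ) 1) := isCompact_closedBall _ _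
    obtain ⟨K, hK⟩ := LocallyLipschitzOn.exists_lipschitzOnWith_of_compact hcomp
      ((hF i c hc).locallyLipschitz.locallyLipschitzOn)
    refine (hK.hausdorffMeasure_image_le (Nat.cast_nonneg m)).trans_lt ?_
    have := hausdorffMeasure_pi_real (ι := Fin m)
    rw [Fintype.card_fin] at this
    rw [this]
    exact ENNReal.mul_lt_top (ENNReal.rpow_lt_top_of_nonneg (Nat.cast_nonneg m) (by simp))
      hcomp.measure_lt_top
  have hsub : Metric.sphere (0 : EuclideanSpace ℝ (Fin (m+1))) 1 ⊆
      ⋃ i : Fin (m+1), (F i 1 '' Metric.closedBall 0 1 ∪ F i (-1) '' Metric.closedBall 0 1) := by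
    intro z hz
    have hz1 : ‖z‖ = 1 := by simpa using hz
    obtain ⟨i, hi⟩ := Finite.exists_max (fun i => |z i|)
    have hi0 : 0 < |z i| := by
      by_contra h
      have : z = 0 := by
        ext j
        have := hi j
        have h2 := abs_nonneg (z j)
        simpa using (abs_eq_zero.1 (by linarith : |z j| = 0))
      simp [this] at hz1
    let x : Fin m → ℝ := fun k => z (i.succAbove k) / |z i|
    have hx : x ∈ Metric.closedBall (0 : Fin m → ℝ) 1 := by
      rw [mem_closedBall_zero_iff, pi_norm_le_iff_of_nonneg zero_le_one]
      intro k
      rw [Real.norm_eq_abs, abs_div, abs_abs, div_le_one hi0]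
      exact hi _
    have key : ∀ c, z i / |z i| = c → F i c x = z := by
      intro c hc
      have : v i c x = |z i|⁻¹ • z := by
        ext j
        refine Fin.succAboveCases i ?_ (fun k => ?_) j
        · rw [hvi, ← hc]; simp [div_eq_inv_mul]
        · simp [v, x, div_eq_inv_mul]
      simp only [F]
      rw [this, norm_smul, hz1, smul_smul]
      simp [hi0.ne']
    refine Set.mem_iUnion.2 ⟨i, ?_⟩
    rcases lt_or_gt_of_ne (abs_pos.1 hi0) with h | h
    · right; exact ⟨x, hx, key _ (by rw [abs_of_neg h, div_neg, div_self h.ne])⟩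
    · left; exact ⟨x, hx, key _ (by rw [abs_of_pos h, div_self h.ne'])⟩
  refine (measure_mono hsub).trans_lt ((measure_iUnion_fintype_le _ _).trans_lt ?_)
  refine ENNReal.sum_lt_top.2 fun i _ => (measure_union_le _ _).trans_lt ?_
  exact ENNReal.add_lt_top.2 ⟨hfin i 1 one_ne_zero, hfin i (-1) (by norm_num)⟩

lemma scap_pos (m : ℕ) (hm : 1 ≤ m) (s : ℝ) (hs : |s| < 1) :
    0 < (μH[(m : ℝ)] : Measure (EuclideanSpace ℝ (Fin (m+1))))
      ({z | |s| < z (Fin.last m) ∧ |z 0| < z (Fin.last m)} ∩ Metric.sphere 0 1) := by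
  let P : EuclideanSpace ℝ (Fin (m+1)) → (Fin m → ℝ) := fun z k => z k.castSucc
  have hP : LipschitzWith 1 P := by
    refine LipschitzWith.of_dist_le_mul fun x y => ?_
    rw [NNReal.coe_one, one_mul, dist_pi_le_iff dist_nonneg]
    intro k
    rw [Real.dist_eq, dist_eq_norm]
    exact PiLp.norm_apply_le (x - y) k.castSucc
  let r : (Fin m → ℝ) → ℝ := fun x => Real.sqrt (1 - ∑ k, x k ^ 2)
  have hr : Continuous r := by fun_prop
  let V : Set (Fin m → ℝ) := {x | |s| < r x ∧ |x ⟨0, hm⟩| < r x}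
  have hV : IsOpen V := by
    apply IsOpen.inter
    · exact isOpen_lt continuous_const hr
    · exact isOpen_lt (by fun_prop) hr
  have hVn : V.Nonempty := ⟨0, by simp [V, r, hs]⟩
  have hVpos := hV.measure_pos volume hVn
  have hvol := hausdorffMeasure_pi_real (ι := Fin m)
  rw [Fintype.card_fin] at hvol
  rw [← hvol] at hVpos
  refine hVpos.trans_le ((measure_mono ?_).trans
    ((hP.hausdorffMeasure_image_le (Nat.cast_nonneg m)
      ({z | |s| < z (Fin.last m) ∧ |z 0| < z (Fin.last m)} ∩ Metric.sphere 0 1)).trans ?_))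
  · rintro x ⟨h1, h2⟩
    have h0 : (0 : Fin (m+1)) = Fin.castSucc ⟨0, hm⟩ := by ext; simp
    refine ⟨WithLp.toLp 2 (Fin.snoc (α := fun _ => ℝ) x (r x)), ⟨⟨by simpa using h1, ?_⟩, ?_⟩, ?_⟩
    · rw [h0]; simpa only [Fin.snoc_castSucc, Fin.snoc_last] using h2
    · have hpos : 0 < r x := (abs_nonneg s).trans_lt h1
      have : r x ^ 2 = 1 - ∑ k, x k ^ 2 := Real.sq_sqrt (Real.sqrt_pos.1 hpos).le
      rw [mem_sphere_zero_iff_norm, EuclideanSpace.norm_eq, Real.sqrt_eq_one, Fin.sum_univ_castSucc]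
      simp [this]
    · ext k; simp [P]
  · simp

lemma scap_core (m : ℕ) (s : ℝ) (A : Fin (m+1)) (hm : 1 ≤ m) (hA : A = Fin.last m) :
    (s ∈ Set.Ioo (-1 : ℝ) 1 →
      0 < ∫ z in {z : EuclideanSpace ℝ (Fin (m+1)) | ‖z‖ = 1 ∧ -s < z A},
        (z A + s) * ((z A) ^ 2 - (z 0) ^ 2) ∂(μH[(m : ℝ)])) ∧
    (1 ≤ s →
      (∫ z in {z : EuclideanSpace ℝ (Fin (m+1)) | ‖z‖ = 1 ∧ -s < z A},
        (z A + s) * ((z A) ^ 2 - (z 0) ^ 2) ∂(μH[(m : ℝ)])) = 0) := by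
  set μ : Measure (EuclideanSpace ℝ (Fin (m+1))) := μH[(m : ℝ)] with hμ
  set S : Set (EuclideanSpace ℝ (Fin (m+1))) := Metric.sphere 0 1
  have hSm : MeasurableSet S := Metric.isClosed_sphere.measurableSet
  let h : EuclideanSpace ℝ (Fin (m+1)) → ℝ :=
    fun z => max (z A + s) 0 * ((z A) ^ 2 - (z 0) ^ 2)
  have hc : Continuous h := by fun_prop
  have hfin : μ S < ⊤ := scap_finite m
  have hint : ∀ g : EuclideanSpace ℝ (Fin (m+1)) → ℝ, Continuous g → Integrable g (μ.restrict S) := by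
    intro g hg
    exact hg.continuousOn.integrableOn_of_subset_isCompact (isCompact_sphere _ _) hSm subset_rfl
      hfin.ne
  have hF : (∫ z in {z : EuclideanSpace ℝ (Fin (m+1)) | ‖z‖ = 1 ∧ -s < z A},
        (z A + s) * ((z A) ^ 2 - (z 0) ^ 2) ∂μ) = ∫ z in S, h z ∂μ := by
    have hU : MeasurableSet {z : EuclideanSpace ℝ (Fin (m+1)) | -s < z A} :=
      (isOpen_lt continuous_const (by fun_prop)).measurableSet
    have : {z : EuclideanSpace ℝ (Fin (m+1)) | ‖z‖ = 1 ∧ -s < z A} =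
        S ∩ {z | -s < z A} := by ext z; simp [S]
    rw [this, ← setIntegral_indicator hU]
    congr 1
    ext z
    by_cases hz : -s < z A
    · rw [Set.indicator_of_mem (by exact hz)]
      simp only [h]; rw [max_eq_left (by linarith)]
    · rw [Set.indicator_of_notMem (by exact hz)]
      simp only [h]; rw [max_eq_right (by linarith), zero_mul]
  have hinv : ∀ (e : EuclideanSpace ℝ (Fin (m+1)) ≃ₗᵢ[ℝ] EuclideanSpace ℝ (Fin (m+1)))
      (g : EuclideanSpace ℝ (Fin (m+1)) → ℝ),
      ∫ z in S, g (e z) ∂μ = ∫ z in S, g z ∂μ := by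
    intro e g
    have h1 : MeasurePreserving e μ μ := e.toIsometryEquiv.measurePreserving_hausdorffMeasure _
    have h2 := h1.setIntegral_preimage_emb e.toHomeomorph.measurableEmbedding g S
    have h3 : e ⁻¹' S = S := by ext z; simp [S]
    rwa [h3] at h2
  let sw : EuclideanSpace ℝ (Fin (m+1)) ≃ₗᵢ[ℝ] EuclideanSpace ℝ (Fin (m+1)) :=
    LinearIsometryEquiv.piLpCongrLeft 2 ℝ ℝ (Equiv.swap 0 A)
  have hsA : ∀ z, sw z A = z 0 := by intro z; simp [sw, LinearIsometryEquiv.piLpCongrLeft_apply, Equiv.piCongrLeft'_apply]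
  have hs0 : ∀ z, sw z 0 = z A := by intro z; simp [sw, LinearIsometryEquiv.piLpCongrLeft_apply, Equiv.piCongrLeft'_apply]
  let H : EuclideanSpace ℝ (Fin (m+1)) → ℝ := fun z =>
    (max (z A + s) 0 + max (-z A + s) 0 - max (z 0 + s) 0 - max (-z 0 + s) 0) *
      ((z A) ^ 2 - (z 0) ^ 2)
  have hHc : Continuous H := by fun_prop
  have h4 : ∫ z in S, H z ∂μ = 4 * ∫ z in S, h z ∂μ := by
    have e1 := hinv sw h
    have e2 := hinv (LinearIsometryEquiv.neg ℝ) h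
    have e3 := (hinv (LinearIsometryEquiv.neg ℝ) (fun z => h (sw z))).trans e1
    have hH : ∀ z, H z = ((h z + h (sw z)) + h (LinearIsometryEquiv.neg ℝ z)) +
        h (sw (LinearIsometryEquiv.neg ℝ z)) := by
      intro z
      simp only [H, h, hsA, hs0]
      simp
      ring
    simp_rw [hH]
    have i0 := hint h hc
    have i1 := hint (fun z => h (sw z)) (hc.comp sw.continuous)
    have i2 := hint (fun z => h (LinearIsometryEquiv.neg ℝ z))
      (hc.comp (LinearIsometryEquiv.neg ℝ).continuous)
    have i3 := hint (fun z => h (sw (LinearIsometryEquiv.neg ℝ z)))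
      (hc.comp (sw.continuous.comp (LinearIsometryEquiv.neg ℝ).continuous))
    have i01 : Integrable (fun z => h z + h (sw z)) (μ.restrict S) := i0.add i1
    have i012 : Integrable (fun z => h z + h (sw z) + h (LinearIsometryEquiv.neg ℝ z))
      (μ.restrict S) := i01.add i2
    rw [integral_add i012 i3, integral_add i01 i2, integral_add i0 i1,
      e1, e2, e3]
    ring
  have gmono : ∀ a b : ℝ, |b| ≤ |a| →
      max (b + s) 0 + max (-b + s) 0 ≤ max (a + s) 0 + max (-a + s) 0 := by
    intro a b hab
    rcases abs_cases a with ⟨h1, _⟩ | ⟨h1, _⟩ <;> rcases abs_cases b with ⟨h2, _⟩ | ⟨h2, _⟩ <;>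
    rcases max_cases (b + s) 0 with ⟨h3, _⟩ | ⟨h3, _⟩ <;>
    rcases max_cases (-b + s) 0 with ⟨h4, _⟩ | ⟨h4, _⟩ <;>
    rw [h3, h4] <;>
    linarith [le_max_left (a + s) 0, le_max_left (-a + s) 0, le_max_right (a + s) 0,
      le_max_right (-a + s) 0]
  rw [hF]
  constructor
  · intro hs
    have hs' : |s| < 1 := abs_lt.2 hs
    have hnn : 0 ≤ H := by
      intro z
      show 0 ≤ H z
      rcases le_total |z A| |z 0| with hz | hz
      · have := gmono _ _ hz
        have h2 := sq_le_sq.2 hz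
        exact mul_nonneg_of_nonpos_of_nonpos (by linarith) (by linarith)
      · have := gmono _ _ hz
        have h2 := sq_le_sq.2 hz
        exact mul_nonneg (by linarith) (by linarith)
    have : 0 < ∫ z in S, H z ∂μ := by
      rw [integral_pos_iff_support_of_nonneg hnn (hint H hHc)]
      refine (scap_pos m hm s hs').trans_le ?_
      rw [← Measure.restrict_apply' hSm]
      refine measure_mono ?_
      rintro z ⟨h1, h2⟩
      rw [← hA] at h1 h2
      rw [abs_lt] at h1
      have h2' := abs_lt.1 h2
      have hsq : z 0 ^ 2 < z A ^ 2 := sq_lt_sq.2 (h2.trans_le (le_abs_self _))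
      refine (mul_pos ?_ (by linarith)).ne'
      rw [max_eq_left (by linarith : 0 ≤ z A + s), max_eq_right (by linarith : -z A + s ≤ 0)]
      rcases max_cases (z 0 + s) 0 with ⟨h3, _⟩ | ⟨h3, _⟩ <;>
      rcases max_cases (-z 0 + s) 0 with ⟨h4, _⟩ | ⟨h4, _⟩ <;>
      rw [h3, h4] <;> linarith
    linarith
  · intro hs
    have : ∫ z in S, H z ∂μ = 0 := by
      refine setIntegral_eq_zero_of_forall_eq_zero fun z hz => ?_
      have hz1 : ‖z‖ = 1 := by simpa [S] using hz
      have ha := abs_le.1 ((PiLp.norm_apply_le z A).trans_eq hz1)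
      have hb := abs_le.1 ((PiLp.norm_apply_le z 0).trans_eq hz1)
      simp only [H]
      rw [max_eq_left (by linarith), max_eq_left (by linarith), max_eq_left (by linarith),
        max_eq_left (by linarith)]
      ring
    linarith


theorem spherical_cap_integral (n : ℕ) (hn : 2 ≤ n) (s : ℝ) :
    (s ∈ Set.Ioo (-1 : ℝ) 1 →
      0 < ∫ z in {z : EuclideanSpace ℝ (Fin n) | ‖z‖ = 1 ∧ -s < z ⟨n - 1, by omega⟩},
        (z ⟨n - 1, by omega⟩ + s) * ((z ⟨n - 1, by omega⟩) ^ 2 - (z ⟨0, by omega⟩) ^ 2)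
          ∂(μH[(n : ℝ) - 1])) ∧
    (1 ≤ s →
      (∫ z in {z : EuclideanSpace ℝ (Fin n) | ‖z‖ = 1 ∧ -s < z ⟨n - 1, by omega⟩},
        (z ⟨n - 1, by omega⟩ + s) * ((z ⟨n - 1, by omega⟩) ^ 2 - (z ⟨0, by omega⟩) ^ 2)
          ∂(μH[(n : ℝ) - 1])) = 0) ∧
    (s ≤ -1 →
      {z : EuclideanSpace ℝ (Fin n) | ‖z‖ = 1 ∧ -s < z ⟨n - 1, by omega⟩} = ∅) := by
  obtain ⟨m, rfl⟩ : ∃ m, n = m + 1 := ⟨n - 1, by omega⟩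
  have hcast : (((m + 1 : ℕ) : ℝ) - 1) = (m : ℝ) := by push_cast; ring
  have hA : (⟨m + 1 - 1, by omega⟩ : Fin (m+1)) = Fin.last m := by ext; simp
  have key := scap_core m s ⟨m + 1 - 1, by omega⟩ (by omega) hA
  rw [hcast]
  refine ⟨key.1, key.2, fun hs => ?_⟩
  ext z
  simp only [Set.mem_ofPred_eq, Set.mem_empty_iff_false, iff_false, not_and, not_lt]
  intro hz
  have := abs_le.1 ((PiLp.norm_apply_le z ⟨m + 1 - 1, by omega⟩).trans_eq hz)
  linarith
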